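/- For every tripartite density matrix ρ on ℂ^m⊗ℂ^n⊗ℂ^p (indexed by Fin m × (Fin n × Fin p)) and every POVM {P_j} on ℂ^m, the von Neumann Holevo quantities satisfy χ(P, b) ≤ χ(P, bc), where p_j = Tr((P_j ⊗ I) ρ), ρ_{bc|j} = (1/p_j)·Tr_a((P_j ⊗ I) ρ) for p_j ≠ 0, ρ_{b|j} = Tr_c(ρ_{bc|j}), χ(P, bc) = S(Tr_a ρ) − ∑_{j : p_j ≠ 0} p_j S(ρ_{bc|j}), and χ(P, b) = S(Tr_c(Tr_a ρ)) − ∑_{j : p_j ≠ 0} p_j S(ρ_{b|j}). -/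

import Mathlib

open scoped Kronecker
open Finset Matrix
open scoped ComplexOrder

noncomputable section

/-- A density matrix: positive semidefinite with unit trace. -/
def IsDensity {d : Type} [Fintype d] [DecidableEq d] (ρ : Matrix d d ℂ) : Prop :=
  ρ.PosSemidef ∧ ρ.trace = 1

/-- An entropy family: a real number assigned to every square complex matrix of
every finite dimension. -/
def EntropyFamily : Type 1 :=
  ∀ (d : Type) [Fintype d] [DecidableEq d], Matrix d d ℂ → ℝ

/-- Concavity of an entropy family. -/
def EntropyFamily.Concave (S : EntropyFamily) : Prop :=
  ∀ (d : Type) [Fintype d] [DecidableEq d] (k : ℕ) (p : Fin k → ℝ)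
    (ρ : Fin k → Matrix d d ℂ),
    (∀ j, 0 ≤ p j) → ∑ j, p j = 1 → (∀ j, IsDensity (ρ j)) →
    ∑ j, p j * S d (ρ j) ≤ S d (∑ j, (p j : ℂ) • ρ j)

/-- The entropy family depends only on the nonzero spectrum: `S (A Aᴴ) = S (Aᴴ A)`. -/
def EntropyFamily.SpectrumDep (S : EntropyFamily) : Prop :=
  ∀ (d e : Type) [Fintype d] [DecidableEq d] [Fintype e] [DecidableEq e]
    (A : Matrix d e ℂ), S d (A * Aᴴ) = S e (Aᴴ * A)

/-- Partial trace over the first tensor factor. -/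
def trA {da db : Type} [Fintype da] (ρ : Matrix (da × db) (da × db) ℂ) :
    Matrix db db ℂ :=
  Matrix.of fun j j' => ∑ i, ρ (i, j) (i, j')

/-- Partial trace over the second tensor factor. -/
def trB {da db : Type} [Fintype db] (ρ : Matrix (da × db) (da × db) ℂ) :
    Matrix da da ℂ :=
  Matrix.of fun i i' => ∑ j, ρ (i, j) (i', j)

/-- A POVM: a finite family of positive semidefinite matrices summing to `1`. -/
def IsPOVM {d : Type} [Fintype d] [DecidableEq d] {k : ℕ}
    (P : Fin k → Matrix d d ℂ) : Prop :=
  (∀ j, (P j).PosSemidef) ∧ ∑ j, P j = 1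

/-- Probability of POVM outcome `P` on the first factor: `Tr((P ⊗ I) ρ)`. -/
def prob {da db : Type} [Fintype da] [Fintype db] [DecidableEq da] [DecidableEq db]
    (P : Matrix da da ℂ) (ρ : Matrix (da × db) (da × db) ℂ) : ℝ :=
  (((P ⊗ₖ (1 : Matrix db db ℂ)) * ρ).trace).re

/-- Conditional state on the second factor given POVM outcome `P`. -/
def condB {da db : Type} [Fintype da] [Fintype db] [DecidableEq da] [DecidableEq db]
    (P : Matrix da da ℂ) (ρ : Matrix (da × db) (da × db) ℂ) : Matrix db db ℂ :=
  (((prob P ρ)⁻¹ : ℝ) : ℂ) • trA ((P ⊗ₖ (1 : Matrix db db ℂ)) * ρ)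

/-- The Holevo quantity `χ(P, b)`. -/
def holevoB (S : EntropyFamily) {da db : Type} [Fintype da] [DecidableEq da]
    [Fintype db] [DecidableEq db] {k : ℕ} (P : Fin k → Matrix da da ℂ)
    (ρ : Matrix (da × db) (da × db) ℂ) : ℝ :=
  S db (trA ρ) -
    ∑ j ∈ univ.filter (fun j => prob (P j) ρ ≠ 0),
      prob (P j) ρ * S db (condB (P j) ρ)

/-- Eigenvalues of a Hermitian matrix (junk value `0` if not Hermitian). -/
def eigs {d : Type} [Fintype d] [DecidableEq d] (X : Matrix d d ℂ) : d → ℝ :=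
  if h : X.IsHermitian then h.eigenvalues else 0

/-- von Neumann entropy `S(ρ) = ∑ᵢ (−λᵢ log λᵢ)`. -/
def vN {d : Type} [Fintype d] [DecidableEq d] (ρ : Matrix d d ℂ) : ℝ :=
  ∑ i, Real.negMulLog (eigs ρ i)

/-- von Neumann entropy as an entropy family. -/
def vNF : EntropyFamily := fun d _ _ ρ => vN ρ

/-- Quadratic entropy `S_Q(ρ) = 1 − Re Tr(ρ²)`. -/
def SQ {d : Type} [Fintype d] (ρ : Matrix d d ℂ) : ℝ := 1 - ((ρ * ρ).trace).re

/-- Quadratic entropy as an entropy family. -/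
def SQF : EntropyFamily := fun d _ _ ρ => SQ ρ

/-- The outer product `ψ ψᴴ`. -/
def outer {d : Type} (ψ : d → ℂ) : Matrix d d ℂ := Matrix.vecMulVec ψ (star ψ)

/-- A unit vector. -/
def UnitVec {d : Type} [Fintype d] (ψ : d → ℂ) : Prop := ∑ i, ‖ψ i‖ ^ 2 = 1

/-- Kraus operators of a quantum channel: `∑ᵢ Kᵢᴴ Kᵢ = 1`. -/
def IsKraus {n r t : ℕ} (K : Fin t → Matrix (Fin r) (Fin n) ℂ) : Prop :=
  ∑ i, (K i)ᴴ * K i = 1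

/-- Action of the quantum channel with Kraus operators `K`. -/
def channel {n r t : ℕ} (K : Fin t → Matrix (Fin r) (Fin n) ℂ)
    (ρ : Matrix (Fin n) (Fin n) ℂ) : Matrix (Fin r) (Fin r) ℂ :=
  ∑ i, K i * ρ * (K i)ᴴ

/-- Conditional joint state after a POVM element with square root `Q` and
outcome probability `p`: `(1/p) (Q ⊗ I) ρ (Q ⊗ I)`. -/
def condJoint {da db : Type} [Fintype da] [Fintype db] [DecidableEq da]
    [DecidableEq db] (Q : Matrix da da ℂ) (p : ℝ)
    (ρ : Matrix (da × db) (da × db) ℂ) : Matrix (da × db) (da × db) ℂ :=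
  ((p⁻¹ : ℝ) : ℂ) • ((Q ⊗ₖ (1 : Matrix db db ℂ)) * ρ * (Q ⊗ₖ (1 : Matrix db db ℂ)))

/-- Tsallis entropy with parameter `q`. -/
def tsallis (q : ℝ) {d : Type} [Fintype d] [DecidableEq d]
    (ρ : Matrix d d ℂ) : ℝ :=
  ((∑ i, eigs ρ i ^ q) - 1) / (1 - q)

/-- Rényi entropy with parameter `q`. -/
def renyi (q : ℝ) {d : Type} [Fintype d] [DecidableEq d]
    (ρ : Matrix d d ℂ) : ℝ :=
  (1 / (1 - q)) * Real.log (∑ i, eigs ρ i ^ q)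

/-!
The Holevo quantity of an ensemble is the average relative entropy of its members with respect to
their mean, so it suffices that relative entropy does not increase under a partial trace.
Integrating a scalar identity in eigencoordinates of `ρ` and `σ` gives
`D(ρ‖σ) - Tr ρ + Tr σ = ∫₀¹ (1 - t) χ²ₜ(ρ, σ) dt`, where `χ²ₜ(ρ, σ)` is the quadratic form at
`ρ - σ` of the inverse of `Y ↦ (1 - t) Y σ + t ρ Y`. By completing the square, `χ²ₜ(ρ, σ)` is the
maximum over `Y` of `2 Re Tr Yᴴ(ρ - σ) - (1 - t) Tr YᴴYσ - t Tr YYᴴρ`. For the partial traces of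
`ρ` and `σ`, the value of this functional at `Y` is its value for `ρ` and `σ` at `Y ⊗ I`, so its
maximum can only decrease.
-/

section ChiSqIntegral

variable {r s : ℝ}

/-- A primitive in `t` of `(1 - t) (r - s)² / ((1 - t) s + t r)`. -/
def chiSqPrimitive (r s t : ℝ) : ℝ := r * Real.log ((1 - t) * s + t * r) - (r - s) * t

lemma hasDerivAt_chiSqPrimitive {t : ℝ} (h : (1 - t) * s + t * r ≠ 0) :
    HasDerivAt (chiSqPrimitive r s) ((1 - t) * ((r - s) ^ 2 / ((1 - t) * s + t * r))) t := by
  have hmix : HasDerivAt (fun t => (1 - t) * s + t * r) (r - s) t :=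
    ((((hasDerivAt_id t).const_sub 1).mul_const s).add ((hasDerivAt_id t).mul_const r)).congr_deriv
      (by ring)
  refine (((hmix.log h).const_mul r).sub ((hasDerivAt_id t).const_mul (r - s))).congr_deriv ?_
  simp only [mul_one]
  generalize hu : (1 - t) * s + t * r = u at h ⊢
  field_simp
  rw [← hu]
  ring

lemma continuousOn_chiSqPrimitive (hr : 0 ≤ r) (hs : 0 < s) :
    ContinuousOn (chiSqPrimitive r s) (Set.Icc 0 1) := by
  unfold chiSqPrimitive
  rcases hr.eq_or_lt with rfl | hr
  · simp only [zero_mul]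
    fun_prop
  · have hmix (t : ℝ) (ht : t ∈ Set.Icc 0 1) : (1 - t) * s + t * r ≠ 0 :=
      ((convex_Ioi (0 : ℝ)) hs hr (sub_nonneg.2 ht.2) ht.1 (by ring)).ne'
    fun_prop (disch := assumption)

lemma convexComb_pos (hr : 0 ≤ r) (hs : 0 < s) {t : ℝ} (ht : t ∈ Set.Ioo 0 1) :
    0 < (1 - t) * s + t * r :=
  add_pos_of_pos_of_nonneg (mul_pos (sub_pos.2 ht.2) hs) (mul_nonneg ht.1.le hr)

lemma intervalIntegrable_chiSq (hr : 0 ≤ r) (hs : 0 ≤ s) (h : s = 0 → r = 0) :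
    IntervalIntegrable (fun t => (1 - t) * ((r - s) ^ 2 / ((1 - t) * s + t * r)))
      MeasureTheory.volume 0 1 := by
  rcases hs.eq_or_lt with rfl | hs
  · simp [h rfl]
  refine intervalIntegral.intervalIntegrable_deriv_of_nonneg (g := chiSqPrimitive r s) ?_ ?_ ?_ <;>
    simp only [Set.uIcc_of_le, min_eq_left, max_eq_right, zero_le_one]
  · exact continuousOn_chiSqPrimitive hr hs
  · exact fun t ht => hasDerivAt_chiSqPrimitive (convexComb_pos hr hs ht).ne'
  · exact fun t ht => mul_nonneg (sub_nonneg.2 ht.2.le)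
      (div_nonneg (sq_nonneg _) (convexComb_pos hr hs ht).le)

lemma integral_chiSq (hr : 0 ≤ r) (hs : 0 ≤ s) (h : s = 0 → r = 0) :
    ∫ t in (0 : ℝ)..1, (1 - t) * ((r - s) ^ 2 / ((1 - t) * s + t * r)) =
      r * (Real.log r - Real.log s) - r + s := by
  have hint := intervalIntegrable_chiSq hr hs h
  rcases hs.eq_or_lt with rfl | hs
  · simp [h rfl]
  rw [intervalIntegral.integral_eq_sub_of_hasDerivAt_of_le zero_le_one
    (continuousOn_chiSqPrimitive hr hs)
    (fun t ht => hasDerivAt_chiSqPrimitive (convexComb_pos hr hs ht).ne') hint]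
  simp only [chiSqPrimitive]
  ring_nf

end ChiSqIntegral

section EigenEntries

variable {d e : Type*} [Fintype d] [DecidableEq d] [Fintype e] [DecidableEq e]
  {ρ : Matrix d d ℂ} {σ : Matrix e e ℂ}

/-- The entries of a matrix `Y`, seen as a map `ℂ^e → ℂ^d`, in the eigenbases of `σ` and `ρ`:
the `(i, k)` entry is `⟨uᵢ, Y vₖ⟩` for the eigenvectors `uᵢ` of `ρ` and `vₖ` of `σ`. -/
@[simps]
def eigenEntries (hρ : ρ.IsHermitian) (hσ : σ.IsHermitian) :
    Matrix d e ℂ ≃ₗ[ℂ] Matrix d e ℂ where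
  toFun Y := (hρ.eigenvectorUnitary : Matrix d d ℂ)ᴴ * Y * (hσ.eigenvectorUnitary : Matrix e e ℂ)
  invFun y := (hρ.eigenvectorUnitary : Matrix d d ℂ) * y * (hσ.eigenvectorUnitary : Matrix e e ℂ)ᴴ
  map_add' X Y := by rw [Matrix.mul_add, Matrix.add_mul]
  map_smul' c Y := by simp
  left_inv Y := by
    simp only [Matrix.mul_assoc, ← star_eq_conjTranspose,
      Unitary.mul_star_self_of_mem (SetLike.coe_mem _), Matrix.mul_one]
    rw [← Matrix.mul_assoc, Unitary.mul_star_self_of_mem (SetLike.coe_mem _), Matrix.one_mul]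
  right_inv y := by
    simp only [Matrix.mul_assoc, ← star_eq_conjTranspose,
      Unitary.star_mul_self_of_mem (SetLike.coe_mem _), Matrix.mul_one]
    rw [← Matrix.mul_assoc, Unitary.star_mul_self_of_mem (SetLike.coe_mem _), Matrix.one_mul]

lemma cfc_id_of_isHermitian (hρ : ρ.IsHermitian) : cfc (id : ℝ → ℝ) ρ = ρ :=
  (hρ.cfc_eq id).trans hρ.spectral_theorem.symm

lemma eigenEntries_self_one (hρ : ρ.IsHermitian) : eigenEntries hρ hρ 1 = 1 := by
  simp [← star_eq_conjTranspose]

lemma eigenEntries_cfc_mul (hρ : ρ.IsHermitian) (hσ : σ.IsHermitian) (f : ℝ → ℝ)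
    (Y : Matrix d e ℂ) (i : d) (k : e) :
    eigenEntries hρ hσ (cfc f ρ * Y) i k = f (hρ.eigenvalues i) * eigenEntries hρ hσ Y i k := by
  simp only [eigenEntries_apply, hρ.cfc_eq, IsHermitian.cfc, Unitary.conjStarAlgAut_apply,
    ← Matrix.mul_assoc, ← star_eq_conjTranspose, Unitary.coe_star_mul_self, Matrix.one_mul]
  simp only [Matrix.mul_assoc, Matrix.diagonal_mul]
  simp

lemma eigenEntries_mul_cfc (hρ : ρ.IsHermitian) (hσ : σ.IsHermitian) (g : ℝ → ℝ)
    (Y : Matrix d e ℂ) (i : d) (k : e) :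
    eigenEntries hρ hσ (Y * cfc g σ) i k = eigenEntries hρ hσ Y i k * g (hσ.eigenvalues k) := by
  simp only [eigenEntries_apply, hσ.cfc_eq, IsHermitian.cfc, Unitary.conjStarAlgAut_apply,
    Matrix.mul_assoc, ← star_eq_conjTranspose, Unitary.coe_star_mul_self, Matrix.mul_one]
  simp only [← Matrix.mul_assoc, Matrix.mul_diagonal]
  simp

lemma eigenEntries_mul_left (hρ : ρ.IsHermitian) (hσ : σ.IsHermitian) (Y : Matrix d e ℂ)
    (i : d) (k : e) :
    eigenEntries hρ hσ (ρ * Y) i k = hρ.eigenvalues i * eigenEntries hρ hσ Y i k := by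
  simpa [cfc_id_of_isHermitian hρ] using eigenEntries_cfc_mul hρ hσ id Y i k

lemma eigenEntries_mul_right (hρ : ρ.IsHermitian) (hσ : σ.IsHermitian) (Y : Matrix d e ℂ)
    (i : d) (k : e) :
    eigenEntries hρ hσ (Y * σ) i k = eigenEntries hρ hσ Y i k * hσ.eigenvalues k := by
  simpa [cfc_id_of_isHermitian hσ] using eigenEntries_mul_cfc hρ hσ id Y i k

lemma trace_conjTranspose_mul_eq_sum (hρ : ρ.IsHermitian) (hσ : σ.IsHermitian)
    (X Y : Matrix d e ℂ) :
    (Xᴴ * Y).trace =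
      ∑ i, ∑ k, star (eigenEntries hρ hσ X i k) * eigenEntries hρ hσ Y i k := by
  let U := (hρ.eigenvectorUnitary : Matrix d d ℂ)
  let V := (hσ.eigenvectorUnitary : Matrix e e ℂ)
  have hU : U * Uᴴ = 1 := Unitary.mul_star_self_of_mem hρ.eigenvectorUnitary.2
  have hV : V * Vᴴ = 1 := Unitary.mul_star_self_of_mem hσ.eigenvectorUnitary.2
  calc (Xᴴ * Y).trace = (Xᴴ * (U * Uᴴ) * Y * (V * Vᴴ)).trace := by simp [hU, hV]
    _ = ((Xᴴ * U * Uᴴ * Y * V) * Vᴴ).trace := by simp only [Matrix.mul_assoc]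
    _ = ((eigenEntries hρ hσ X)ᴴ * eigenEntries hρ hσ Y).trace := by
        rw [trace_mul_comm]
        simp [U, V, Matrix.mul_assoc]
    _ = _ := by
        simp only [Matrix.trace, Matrix.diag_apply, Matrix.mul_apply, conjTranspose_apply]
        exact Finset.sum_comm

lemma re_trace_conjTranspose_mul_mul_right (hρ : ρ.IsHermitian) (hσ : σ.IsHermitian)
    (Y : Matrix d e ℂ) :
    (Yᴴ * Y * σ).trace.re =
      ∑ i, ∑ k, hσ.eigenvalues k * Complex.normSq (eigenEntries hρ hσ Y i k) := by
  simp only [Matrix.mul_assoc, trace_conjTranspose_mul_eq_sum hρ hσ Y, eigenEntries_mul_right,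
    Complex.re_sum]
  refine Finset.sum_congr rfl fun i _ => Finset.sum_congr rfl fun k _ => ?_
  rw [← mul_assoc, Complex.star_def, ← Complex.normSq_eq_conj_mul_self, ← Complex.ofReal_mul,
    Complex.ofReal_re, mul_comm]

lemma re_trace_mul_conjTranspose_mul_left (hρ : ρ.IsHermitian) (hσ : σ.IsHermitian)
    (Y : Matrix d e ℂ) :
    (Y * Yᴴ * ρ).trace.re =
      ∑ i, ∑ k, hρ.eigenvalues i * Complex.normSq (eigenEntries hρ hσ Y i k) := by
  rw [Matrix.mul_assoc, Matrix.trace_mul_comm, Matrix.mul_assoc]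
  simp only [trace_conjTranspose_mul_eq_sum hρ hσ Y, eigenEntries_mul_left, Complex.re_sum]
  refine Finset.sum_congr rfl fun i _ => Finset.sum_congr rfl fun k _ => ?_
  rw [mul_left_comm, Complex.star_def, ← Complex.normSq_eq_conj_mul_self, ← Complex.ofReal_mul,
    Complex.ofReal_re]

end EigenEntries

section ChiSqDiv

variable {d : Type*} [Fintype d] [DecidableEq d] {ρ σ : Matrix d d ℂ}

lemma eigenEntries_cfc_sub_cfc (hρ : ρ.IsHermitian) (hσ : σ.IsHermitian) (f g : ℝ → ℝ)
    (i k : d) :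
    eigenEntries hρ hσ (cfc f ρ - cfc g σ) i k =
      (f (hρ.eigenvalues i) - g (hσ.eigenvalues k) : ℝ) * eigenEntries hρ hσ 1 i k := by
  have hl := eigenEntries_cfc_mul hρ hσ f 1 i k
  have hr := eigenEntries_mul_cfc hρ hσ g 1 i k
  rw [Matrix.mul_one] at hl
  rw [Matrix.one_mul] at hr
  rw [map_sub, Matrix.sub_apply, hl, hr, Complex.ofReal_sub]
  ring

lemma eigenEntries_left (hρ : ρ.IsHermitian) (hσ : σ.IsHermitian) (i k : d) :
    eigenEntries hρ hσ ρ i k = hρ.eigenvalues i * eigenEntries hρ hσ 1 i k := by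
  simpa using eigenEntries_mul_left hρ hσ 1 i k

lemma eigenEntries_sub (hρ : ρ.IsHermitian) (hσ : σ.IsHermitian) (i k : d) :
    eigenEntries hρ hσ (ρ - σ) i k =
      (hρ.eigenvalues i - hσ.eigenvalues k : ℝ) * eigenEntries hρ hσ 1 i k := by
  simpa [cfc_id_of_isHermitian hρ, cfc_id_of_isHermitian hσ] using
    eigenEntries_cfc_sub_cfc hρ hσ id id i k

/-- The squared overlap `|⟨uᵢ, vₖ⟩|²` of the eigenvectors `uᵢ` of `ρ` and `vₖ` of `σ`. -/
def overlap (hρ : ρ.IsHermitian) (hσ : σ.IsHermitian) (i k : d) : ℝ :=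
  Complex.normSq (eigenEntries hρ hσ 1 i k)

lemma overlap_eq_zero_or_eigenvalues_eq_zero_imp (hρ : ρ.IsHermitian) (hσ : σ.IsHermitian)
    (hker : ∀ v, σ *ᵥ v = 0 → ρ *ᵥ v = 0) (i k : d) :
    overlap hρ hσ i k = 0 ∨ (hσ.eigenvalues k = 0 → hρ.eigenvalues i = 0) := by
  refine or_iff_not_imp_right.2 fun h => ?_
  obtain ⟨hk, hi⟩ := Classical.not_imp.1 h
  have hv : ρ *ᵥ ⇑(hσ.eigenvectorBasis k) = 0 :=
    hker _ (by rw [hσ.mulVec_eigenvectorBasis, hk, zero_smul])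
  have hentry : eigenEntries hρ hσ ρ i k = 0 := by
    have hcol (j : d) : (ρ * (hσ.eigenvectorUnitary : Matrix d d ℂ)) j k = 0 := congrFun hv j
    rw [eigenEntries_apply, Matrix.mul_assoc, Matrix.mul_apply]
    simp only [hcol, mul_zero, Finset.sum_const_zero]
  rw [eigenEntries_left] at hentry
  simpa [overlap, hi] using hentry

/-- The family `t ∈ (0, 1)` of quantum `χ²`-divergences: the quadratic form at `ρ - σ` of the
inverse of `Y ↦ (1 - t) Y σ + t ρ Y`, in eigencoordinates. -/
def chiSqDiv (hρ : ρ.IsHermitian) (hσ : σ.IsHermitian) (t : ℝ) : ℝ :=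
  ∑ i, ∑ k, (hρ.eigenvalues i - hσ.eigenvalues k) ^ 2 /
    ((1 - t) * hσ.eigenvalues k + t * hρ.eigenvalues i) * overlap hρ hσ i k

/-- The concave functional of `Y` whose maximum is `chiSqDiv`. -/
def chiSqFunctional (ρ σ : Matrix d d ℂ) (t : ℝ) (Y : Matrix d d ℂ) : ℝ :=
  2 * (Yᴴ * (ρ - σ)).trace.re - ((1 - t) * (Yᴴ * Y * σ).trace.re + t * (Y * Yᴴ * ρ).trace.re)

lemma two_mul_re_sub_mul_normSq_eq {D x : ℝ} (h : D = 0 → x = 0) (y w : ℂ) :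
    2 * (star y * (x * w)).re - D * Complex.normSq y =
      x ^ 2 / D * Complex.normSq w - D * Complex.normSq (y - (x / D : ℝ) * w) := by
  rcases eq_or_ne D 0 with rfl | hD
  · simp [h rfl]
  · simp only [RCLike.star_def, Complex.mul_re, Complex.conj_re, Complex.ofReal_re,
      Complex.ofReal_im, zero_mul, sub_zero, Complex.conj_im, Complex.mul_im, add_zero, neg_mul,
      sub_neg_eq_add, Complex.normSq_apply, Complex.ofReal_div, Complex.sub_re,
      Complex.div_ofReal_re, Complex.div_ofReal_im, zero_div, Complex.sub_im]
    field_simp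
    ring

lemma sub_eq_zero_of_convexComb_eq_zero {r s t : ℝ} (hr : 0 ≤ r) (hs : 0 ≤ s) (ht : t ∈ Set.Ioo 0 1)
    (h : (1 - t) * s + t * r = 0) : r - s = 0 := by
  rcases hs.eq_or_lt with rfl | hs
  · simpa [ht.1.ne'] using h
  · exact absurd h (convexComb_pos hr hs ht).ne'

lemma chiSqFunctional_eq (hρ : ρ.PosSemidef) (hσ : σ.PosSemidef) {t : ℝ}
    (ht : t ∈ Set.Ioo 0 1) (Y : Matrix d d ℂ) :
    chiSqFunctional ρ σ t Y = chiSqDiv hρ.1 hσ.1 t -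
      ∑ i, ∑ k, ((1 - t) * hσ.1.eigenvalues k + t * hρ.1.eigenvalues i) *
        Complex.normSq (eigenEntries hρ.1 hσ.1 Y i k -
          ((hρ.1.eigenvalues i - hσ.1.eigenvalues k) /
            ((1 - t) * hσ.1.eigenvalues k + t * hρ.1.eigenvalues i) : ℝ) *
          eigenEntries hρ.1 hσ.1 1 i k) := by
  rw [chiSqFunctional, trace_conjTranspose_mul_eq_sum hρ.1 hσ.1,
    re_trace_conjTranspose_mul_mul_right hρ.1 hσ.1,
    re_trace_mul_conjTranspose_mul_left hρ.1 hσ.1, chiSqDiv]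
  simp only [overlap, Complex.re_sum, Finset.mul_sum, ← Finset.sum_add_distrib,
    ← Finset.sum_sub_distrib]
  refine Finset.sum_congr rfl fun i _ => Finset.sum_congr rfl fun k _ => ?_
  rw [← two_mul_re_sub_mul_normSq_eq (sub_eq_zero_of_convexComb_eq_zero (hρ.eigenvalues_nonneg i)
    (hσ.eigenvalues_nonneg k) ht), eigenEntries_sub]
  ring

lemma isGreatest_chiSqDiv (hρ : ρ.PosSemidef) (hσ : σ.PosSemidef) {t : ℝ}
    (ht : t ∈ Set.Ioo 0 1) :
    IsGreatest (Set.range (chiSqFunctional ρ σ t)) (chiSqDiv hρ.1 hσ.1 t) := by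
  constructor
  · refine ⟨(eigenEntries hρ.1 hσ.1).symm (Matrix.of fun i k =>
      ((hρ.1.eigenvalues i - hσ.1.eigenvalues k) /
        ((1 - t) * hσ.1.eigenvalues k + t * hρ.1.eigenvalues i) : ℝ) *
          eigenEntries hρ.1 hσ.1 1 i k), ?_⟩
    rw [chiSqFunctional_eq hρ hσ ht, LinearEquiv.apply_symm_apply]
    simp only [Matrix.of_apply, sub_self, map_zero, mul_zero, Finset.sum_const_zero, sub_zero]
  · rintro _ ⟨Y, rfl⟩
    rw [chiSqFunctional_eq hρ hσ ht]
    exact sub_le_self _ (Finset.sum_nonneg fun i _ => Finset.sum_nonneg fun k _ =>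
      mul_nonneg (add_nonneg (mul_nonneg (sub_nonneg.2 ht.2.le) (hσ.eigenvalues_nonneg k))
        (mul_nonneg ht.1.le (hρ.eigenvalues_nonneg i))) (Complex.normSq_nonneg _))

end ChiSqDiv

section Kernel

variable {𝕜 d e ι : Type*} [RCLike 𝕜] [Fintype d] [Fintype e] [Fintype ι]

lemma mulVec_eq_zero_of_sum_mulVec_eq_zero {A : ι → Matrix d d 𝕜} (hA : ∀ i, (A i).PosSemidef)
    {v : d → 𝕜} (hv : (∑ i, A i) *ᵥ v = 0) (i : ι) : A i *ᵥ v = 0 := by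
  have hsum : ∑ i, star v ⬝ᵥ (A i *ᵥ v) = 0 := by
    rw [← dotProduct_sum, ← Matrix.sum_mulVec, hv, dotProduct_zero]
  rw [← (hA i).dotProduct_mulVec_zero_iff]
  exact (Finset.sum_eq_zero_iff_of_nonneg fun i _ => (hA i).dotProduct_mulVec_nonneg v).1 hsum i
    (mem_univ i)

lemma conjTranspose_mul_mul_same_mulVec_eq_zero_iff {A : Matrix d d 𝕜} (hA : A.PosSemidef)
    (K : Matrix d e 𝕜) (v : e → 𝕜) : (Kᴴ * A * K) *ᵥ v = 0 ↔ A *ᵥ (K *ᵥ v) = 0 := by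
  rw [← (hA.conjTranspose_mul_mul_same K).dotProduct_mulVec_zero_iff,
    ← hA.dotProduct_mulVec_zero_iff, star_mulVec, ← dotProduct_mulVec, mulVec_mulVec,
    mulVec_mulVec, Matrix.mul_assoc]

end Kernel

section PartialTrace

variable {d e ι : Type}

lemma trB_sub [Fintype e] (X Y : Matrix (d × e) (d × e) ℂ) : trB (X - Y) = trB X - trB Y := by
  ext
  simp [trB]

lemma trB_sum_smul [Fintype e] [Fintype ι] (c : ι → ℂ) (X : ι → Matrix (d × e) (d × e) ℂ) :
    trB (∑ j, c j • X j) = ∑ j, c j • trB (X j) := by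
  ext
  simp only [trB, Matrix.of_apply, Matrix.sum_apply, Matrix.smul_apply, Finset.smul_sum]
  exact Finset.sum_comm

lemma trA_sum [Fintype d] [Fintype ι] (X : ι → Matrix (d × e) (d × e) ℂ) :
    trA (∑ j, X j) = ∑ j, trA (X j) := by
  ext
  simp only [trA, Matrix.of_apply, Matrix.sum_apply]
  exact Finset.sum_comm

lemma trA_eq_trB_submatrix_swap [Fintype d] (X : Matrix (d × e) (d × e) ℂ) :
    trA X = trB (X.submatrix Prod.swap Prod.swap) := rfl

lemma trB_eq_sum_submatrix [Fintype e] (X : Matrix (d × e) (d × e) ℂ) :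
    trB X = ∑ j, X.submatrix (·, j) (·, j) := by
  ext
  simp [trB, Matrix.sum_apply]

lemma posSemidef_trB [Fintype e] {X : Matrix (d × e) (d × e) ℂ} (hX : X.PosSemidef) :
    (trB X).PosSemidef := by
  rw [trB_eq_sum_submatrix]
  exact posSemidef_sum _ fun j _ => hX.submatrix (·, j)

lemma posSemidef_trA [Fintype d] {X : Matrix (d × e) (d × e) ℂ} (hX : X.PosSemidef) :
    (trA X).PosSemidef :=
  posSemidef_trB (hX.submatrix Prod.swap)

/-- The isometry `v ↦ v ⊗ eⱼ`; these are the Kraus operators of the partial trace `trB`. -/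
def tensorBasis (d : Type) {e : Type} [DecidableEq d] [DecidableEq e] (j : e) :
    Matrix (d × e) d ℂ :=
  (1 : Matrix (d × e) (d × e) ℂ).submatrix id (·, j)

variable [Fintype d] [Fintype e]

lemma trace_trB (X : Matrix (d × e) (d × e) ℂ) : (trB X).trace = X.trace := by
  simp [trB, Matrix.trace, Fintype.sum_prod_type]

lemma trace_trA (X : Matrix (d × e) (d × e) ℂ) : (trA X).trace = X.trace := by
  rw [trA_eq_trB_submatrix_swap, trace_trB]
  exact (Equiv.prodComm e d).sum_comp fun x => X x x

lemma trace_kronecker_one_mul [DecidableEq e] (A : Matrix d d ℂ)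
    (X : Matrix (d × e) (d × e) ℂ) :
    ((A ⊗ₖ (1 : Matrix e e ℂ)) * X).trace = (A * trB X).trace := by
  simp only [Matrix.trace, Matrix.diag_apply, Matrix.mul_apply, Fintype.sum_prod_type, trB,
    Matrix.of_apply, kroneckerMap_apply, Matrix.one_apply, mul_ite, mul_one, mul_zero, ite_mul,
    zero_mul, Finset.sum_ite_eq, Finset.mem_univ, if_true, Finset.mul_sum]
  exact Finset.sum_congr rfl fun i _ => Finset.sum_comm

lemma trA_kronecker_one_mul_comm [DecidableEq e] (A : Matrix d d ℂ)
    (X : Matrix (d × e) (d × e) ℂ) :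
    trA ((A ⊗ₖ (1 : Matrix e e ℂ)) * X) = trA (X * (A ⊗ₖ (1 : Matrix e e ℂ))) := by
  ext j j'
  simp only [trA, Matrix.of_apply, Matrix.mul_apply, Fintype.sum_prod_type, kroneckerMap_apply,
    Matrix.one_apply, mul_ite, mul_one, mul_zero, ite_mul, zero_mul, Finset.sum_ite_eq,
    Finset.sum_ite_eq', Finset.mem_univ, if_true]
  rw [Finset.sum_comm]
  simp only [mul_comm]

lemma trB_eq_sum_tensorBasis [DecidableEq d] [DecidableEq e] (X : Matrix (d × e) (d × e) ℂ) :
    trB X = ∑ j : e, (tensorBasis d j)ᴴ * X * tensorBasis d j := by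
  ext i i'
  simp [trB, tensorBasis, Matrix.sum_apply, Matrix.mul_apply, Matrix.one_apply]

lemma trB_mulVec_eq_zero {ρ σ : Matrix (d × e) (d × e) ℂ} (hσ : σ.PosSemidef)
    (hker : ∀ v, σ *ᵥ v = 0 → ρ *ᵥ v = 0) {v : d → ℂ} (hv : trB σ *ᵥ v = 0) :
    trB ρ *ᵥ v = 0 := by
  classical
  rw [trB_eq_sum_tensorBasis] at hv
  rw [trB_eq_sum_tensorBasis, Matrix.sum_mulVec]
  refine Finset.sum_eq_zero fun j _ => ?_
  have hσj := mulVec_eq_zero_of_sum_mulVec_eq_zero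
    (fun j => hσ.conjTranspose_mul_mul_same (tensorBasis d j)) hv j
  rw [conjTranspose_mul_mul_same_mulVec_eq_zero_iff hσ] at hσj
  rw [← mulVec_mulVec, ← mulVec_mulVec, hker _ hσj, mulVec_zero]

variable [DecidableEq e]

lemma chiSqFunctional_trB (ρ σ : Matrix (d × e) (d × e) ℂ) (t : ℝ) (Y : Matrix d d ℂ) :
    chiSqFunctional (trB ρ) (trB σ) t Y =
      chiSqFunctional ρ σ t (Y ⊗ₖ (1 : Matrix e e ℂ)) := by
  simp only [chiSqFunctional, conjTranspose_kronecker, conjTranspose_one, ← mul_kronecker_mul,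
    Matrix.one_mul, trace_kronecker_one_mul, trB_sub]

lemma chiSqDiv_trB_le [DecidableEq d] {ρ σ : Matrix (d × e) (d × e) ℂ} (hρ : ρ.PosSemidef)
    (hσ : σ.PosSemidef) {t : ℝ} (ht : t ∈ Set.Ioo 0 1) :
    chiSqDiv (posSemidef_trB hρ).1 (posSemidef_trB hσ).1 t ≤ chiSqDiv hρ.1 hσ.1 t := by
  obtain ⟨Y, hY⟩ := (isGreatest_chiSqDiv (posSemidef_trB hρ) (posSemidef_trB hσ) ht).1
  rw [← hY, chiSqFunctional_trB]
  exact (isGreatest_chiSqDiv hρ hσ ht).2 ⟨_, rfl⟩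

end PartialTrace

section RelEntropy

variable {d : Type*} [Fintype d] [DecidableEq d] {ρ σ : Matrix d d ℂ}

/-- Umegaki's relative entropy `Tr ρ (log ρ - log σ)`. As `Real.log 0 = 0`, it has the usual
meaning only when the kernel of `σ` lies in that of `ρ`; otherwise the usual value is `∞`. -/
def relEntropy (ρ σ : Matrix d d ℂ) : ℝ :=
  (ρ * (cfc Real.log ρ - cfc Real.log σ)).trace.re

lemma trace_re_eq_sum_overlap_left (hρ : ρ.IsHermitian) (hσ : σ.IsHermitian) :
    ρ.trace.re = ∑ i, ∑ k, hρ.eigenvalues i * overlap hρ hσ i k := by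
  simpa [overlap] using re_trace_mul_conjTranspose_mul_left hρ hσ 1

lemma trace_re_eq_sum_overlap_right (hρ : ρ.IsHermitian) (hσ : σ.IsHermitian) :
    σ.trace.re = ∑ i, ∑ k, hσ.eigenvalues k * overlap hρ hσ i k := by
  simpa [overlap] using re_trace_conjTranspose_mul_mul_right hρ hσ 1

lemma relEntropy_eq_sum_overlap (hρ : ρ.IsHermitian) (hσ : σ.IsHermitian) :
    relEntropy ρ σ = ∑ i, ∑ k, hρ.eigenvalues i *
      (Real.log (hρ.eigenvalues i) - Real.log (hσ.eigenvalues k)) * overlap hρ hσ i k := by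
  have hherm : relEntropy ρ σ = (ρᴴ * (cfc Real.log ρ - cfc Real.log σ)).trace.re := by
    rw [relEntropy, hρ.eq]
  simp only [hherm, trace_conjTranspose_mul_eq_sum hρ hσ, Complex.re_sum, eigenEntries_left,
    eigenEntries_cfc_sub_cfc, overlap]
  refine Finset.sum_congr rfl fun i _ => Finset.sum_congr rfl fun k _ => ?_
  simp only [Complex.normSq_apply, star_mul', Complex.star_def, Complex.conj_ofReal,
    Complex.mul_re, Complex.mul_im, Complex.ofReal_re, Complex.ofReal_im, Complex.conj_re,
    Complex.conj_im]
  ring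

lemma intervalIntegrable_fun_sum {ι E : Type*} [NormedAddCommGroup E] (s : Finset ι)
    {f : ι → ℝ → E} {μ : MeasureTheory.Measure ℝ} {a b : ℝ}
    (h : ∀ i ∈ s, IntervalIntegrable (f i) μ a b) :
    IntervalIntegrable (fun t => ∑ i ∈ s, f i t) μ a b := by
  simpa only [Finset.sum_fn] using IntervalIntegrable.sum s h

lemma intervalIntegrable_chiSq_mul_overlap (hρ : ρ.PosSemidef) (hσ : σ.PosSemidef)
    (hker : ∀ v, σ *ᵥ v = 0 → ρ *ᵥ v = 0) (i k : d) :
    IntervalIntegrable (fun t => (1 - t) * ((hρ.1.eigenvalues i - hσ.1.eigenvalues k) ^ 2 /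
      ((1 - t) * hσ.1.eigenvalues k + t * hρ.1.eigenvalues i)) * overlap hρ.1 hσ.1 i k)
      MeasureTheory.volume 0 1 := by
  rcases overlap_eq_zero_or_eigenvalues_eq_zero_imp hρ.1 hσ.1 hker i k with h | h
  · simp [h]
  · exact (intervalIntegrable_chiSq (hρ.eigenvalues_nonneg i) (hσ.eigenvalues_nonneg k)
      h).mul_const _

lemma one_sub_mul_chiSqDiv (hρ : ρ.IsHermitian) (hσ : σ.IsHermitian) (t : ℝ) :
    (1 - t) * chiSqDiv hρ hσ t =
      ∑ i, ∑ k, (1 - t) * ((hρ.eigenvalues i - hσ.eigenvalues k) ^ 2 /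
        ((1 - t) * hσ.eigenvalues k + t * hρ.eigenvalues i)) * overlap hρ hσ i k := by
  simp only [chiSqDiv, Finset.mul_sum, mul_assoc]

lemma intervalIntegrable_chiSqDiv (hρ : ρ.PosSemidef) (hσ : σ.PosSemidef)
    (hker : ∀ v, σ *ᵥ v = 0 → ρ *ᵥ v = 0) :
    IntervalIntegrable (fun t => (1 - t) * chiSqDiv hρ.1 hσ.1 t) MeasureTheory.volume 0 1 := by
  simp only [one_sub_mul_chiSqDiv]
  exact intervalIntegrable_fun_sum _ fun i _ => intervalIntegrable_fun_sum _ fun k _ =>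
    intervalIntegrable_chiSq_mul_overlap hρ hσ hker i k

lemma integral_chiSqDiv (hρ : ρ.PosSemidef) (hσ : σ.PosSemidef)
    (hker : ∀ v, σ *ᵥ v = 0 → ρ *ᵥ v = 0) :
    ∫ t in (0 : ℝ)..1, (1 - t) * chiSqDiv hρ.1 hσ.1 t =
      ∑ i, ∑ k, (hρ.1.eigenvalues i *
        (Real.log (hρ.1.eigenvalues i) - Real.log (hσ.1.eigenvalues k)) -
          hρ.1.eigenvalues i + hσ.1.eigenvalues k) * overlap hρ.1 hσ.1 i k := by
  have hint := intervalIntegrable_chiSq_mul_overlap hρ hσ hker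
  simp only [one_sub_mul_chiSqDiv]
  rw [intervalIntegral.integral_finsetSum fun i _ =>
    intervalIntegrable_fun_sum _ fun k _ => hint i k]
  refine Finset.sum_congr rfl fun i _ => ?_
  rw [intervalIntegral.integral_finsetSum fun k _ => hint i k]
  refine Finset.sum_congr rfl fun k _ => ?_
  rw [intervalIntegral.integral_mul_const]
  rcases overlap_eq_zero_or_eigenvalues_eq_zero_imp hρ.1 hσ.1 hker i k with h | h
  · simp only [h, mul_zero]
  · rw [integral_chiSq (hρ.eigenvalues_nonneg i) (hσ.eigenvalues_nonneg k) h]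

lemma relEntropy_eq_integral_chiSqDiv (hρ : ρ.PosSemidef) (hσ : σ.PosSemidef)
    (hker : ∀ v, σ *ᵥ v = 0 → ρ *ᵥ v = 0) :
    relEntropy ρ σ =
      (∫ t in (0 : ℝ)..1, (1 - t) * chiSqDiv hρ.1 hσ.1 t) + ρ.trace.re - σ.trace.re := by
  rw [integral_chiSqDiv hρ hσ hker, relEntropy_eq_sum_overlap hρ.1 hσ.1,
    trace_re_eq_sum_overlap_left hρ.1 hσ.1, trace_re_eq_sum_overlap_right hρ.1 hσ.1]
  simp only [add_mul, sub_mul _ (hρ.1.eigenvalues _), Finset.sum_add_distrib,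
    Finset.sum_sub_distrib]
  ring

lemma relEntropy_trB_le {d e : Type} [Fintype d] [DecidableEq d] [Fintype e] [DecidableEq e]
    {ρ σ : Matrix (d × e) (d × e) ℂ} (hρ : ρ.PosSemidef) (hσ : σ.PosSemidef)
    (hker : ∀ v, σ *ᵥ v = 0 → ρ *ᵥ v = 0) :
    relEntropy (trB ρ) (trB σ) ≤ relEntropy ρ σ := by
  have hker' : ∀ v, trB σ *ᵥ v = 0 → trB ρ *ᵥ v = 0 :=
    fun _ => trB_mulVec_eq_zero hσ hker
  rw [relEntropy_eq_integral_chiSqDiv hρ hσ hker,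
    relEntropy_eq_integral_chiSqDiv (posSemidef_trB hρ) (posSemidef_trB hσ) hker',
    trace_trB, trace_trB]
  gcongr
  exact intervalIntegral.integral_mono_on_of_le_Ioo zero_le_one
    (intervalIntegrable_chiSqDiv (posSemidef_trB hρ) (posSemidef_trB hσ) hker')
    (intervalIntegrable_chiSqDiv hρ hσ hker)
    fun t ht => mul_le_mul_of_nonneg_left (chiSqDiv_trB_le hρ hσ ht) (sub_nonneg.2 ht.2.le)

end RelEntropy

section Holevo

variable {d ι : Type} [Fintype d] [DecidableEq d] [Fintype ι]

lemma vN_eq_neg_re_trace {ρ : Matrix d d ℂ} (hρ : ρ.IsHermitian) :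
    vN ρ = -(ρ * cfc Real.log ρ).trace.re := by
  have htrace : (ρ * cfc Real.log ρ).trace =
      ∑ i, (hρ.eigenvalues i * Real.log (hρ.eigenvalues i) : ℝ) := by
    have hherm : ρ * cfc Real.log ρ = ρᴴ * (cfc Real.log ρ * 1) := by
      rw [hρ.eq, Matrix.mul_one]
    simp only [hherm, trace_conjTranspose_mul_eq_sum hρ hρ, eigenEntries_left,
      eigenEntries_cfc_mul, eigenEntries_self_one, Matrix.one_apply]
    simp
  simp [htrace, vN, eigs, hρ, Real.negMulLog]

/-- The Holevo quantity of the ensemble of matrices `ρ j` with weights `p j`. -/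
def ensembleHolevo (p : ι → ℝ) (ρ : ι → Matrix d d ℂ) : ℝ :=
  vN (∑ j, (p j : ℂ) • ρ j) - ∑ j, p j * vN (ρ j)

lemma ensembleHolevo_eq_sum_relEntropy (p : ι → ℝ) {ρ : ι → Matrix d d ℂ}
    (hρ : ∀ j, (ρ j).IsHermitian) :
    ensembleHolevo p ρ = ∑ j, p j * relEntropy (ρ j) (∑ i, (p i : ℂ) • ρ i) := by
  set σ := ∑ i, (p i : ℂ) • ρ i with hσ_def
  have hσ : σ.IsHermitian :=
    isSelfAdjoint_sum _ fun j _ => IsSelfAdjoint.smul (Complex.conj_ofReal (p j)) (hρ j)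
  have hcross : ∑ j, p j * (ρ j * cfc Real.log σ).trace.re = (σ * cfc Real.log σ).trace.re := by
    conv_rhs => rw [hσ_def, Matrix.sum_mul, ← hσ_def]
    simp [Matrix.trace_sum]
  simp only [ensembleHolevo, ← hσ_def, vN_eq_neg_re_trace hσ, vN_eq_neg_re_trace (hρ _),
    relEntropy, Matrix.mul_sub (ρ _), Matrix.trace_sub, Complex.sub_re, mul_sub, mul_neg,
    Finset.sum_sub_distrib, Finset.sum_neg_distrib, hcross]
  ring

lemma ensembleHolevo_trB_le {e : Type} [Fintype e] [DecidableEq e] {p : ι → ℝ}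
    (hp : ∀ j, 0 ≤ p j) {ρ : ι → Matrix (d × e) (d × e) ℂ} (hρ : ∀ j, (ρ j).PosSemidef) :
    ensembleHolevo p (fun j => trB (ρ j)) ≤ ensembleHolevo p ρ := by
  have hterm (j : ι) : ((p j : ℂ) • ρ j).PosSemidef :=
    (hρ j).smul (Complex.zero_le_real.2 (hp j))
  have hmean : (∑ j, (p j : ℂ) • ρ j).PosSemidef := posSemidef_sum _ fun j _ => hterm j
  rw [ensembleHolevo_eq_sum_relEntropy p fun j => (hρ j).1,
    ensembleHolevo_eq_sum_relEntropy p fun j => (posSemidef_trB (hρ j)).1, ← trB_sum_smul]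
  refine Finset.sum_le_sum fun j _ => ?_
  rcases eq_or_ne (p j) 0 with hj | hj
  · simp [hj]
  refine mul_le_mul_of_nonneg_left (relEntropy_trB_le (hρ j) hmean fun v hv => ?_) (hp j)
  simpa [Matrix.smul_mulVec, hj] using mulVec_eq_zero_of_sum_mulVec_eq_zero hterm hv j

end Holevo

section Measurement

variable {a b : Type} [Fintype a] [Fintype b] [DecidableEq b]

open scoped MatrixOrder Matrix.Norms.L2Operator in
lemma posSemidef_trA_kronecker_mul {A : Matrix a a ℂ} (hA : A.PosSemidef)
    {ρ : Matrix (a × b) (a × b) ℂ} (hρ : ρ.PosSemidef) :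
    (trA ((A ⊗ₖ (1 : Matrix b b ℂ)) * ρ)).PosSemidef := by
  classical
  obtain ⟨B, rfl⟩ := CStarAlgebra.nonneg_iff_eq_star_mul_self.mp hA.nonneg
  have hconj : trA (((star B * B) ⊗ₖ (1 : Matrix b b ℂ)) * ρ) =
      trA ((B ⊗ₖ (1 : Matrix b b ℂ)) * ρ * (B ⊗ₖ (1 : Matrix b b ℂ))ᴴ) := by
    rw [conjTranspose_kronecker, conjTranspose_one, ← trA_kronecker_one_mul_comm,
      ← Matrix.mul_assoc, ← mul_kronecker_mul, Matrix.one_mul, star_eq_conjTranspose]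
  rw [hconj]
  exact posSemidef_trA (hρ.mul_mul_conjTranspose_same _)

variable [DecidableEq a]

lemma prob_eq_re_trace_trA (A : Matrix a a ℂ) (ρ : Matrix (a × b) (a × b) ℂ) :
    prob A ρ = (trA ((A ⊗ₖ (1 : Matrix b b ℂ)) * ρ)).trace.re := by
  rw [prob, trace_trA]

variable {A : Matrix a a ℂ} {ρ : Matrix (a × b) (a × b) ℂ}

lemma prob_nonneg (hA : A.PosSemidef) (hρ : ρ.PosSemidef) : 0 ≤ prob A ρ := by
  rw [prob_eq_re_trace_trA]
  exact (Complex.le_def.1 (posSemidef_trA_kronecker_mul hA hρ).trace_nonneg).1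

lemma posSemidef_condB (hA : A.PosSemidef) (hρ : ρ.PosSemidef) : (condB A ρ).PosSemidef :=
  (posSemidef_trA_kronecker_mul hA hρ).smul
    (Complex.zero_le_real.2 (inv_nonneg.2 (prob_nonneg hA hρ)))

lemma prob_smul_condB (hA : A.PosSemidef) (hρ : ρ.PosSemidef) :
    (prob A ρ : ℂ) • condB A ρ = trA ((A ⊗ₖ (1 : Matrix b b ℂ)) * ρ) := by
  have hpos := posSemidef_trA_kronecker_mul hA hρ
  rcases eq_or_ne (prob A ρ) 0 with h | h
  · have htrace : (trA ((A ⊗ₖ (1 : Matrix b b ℂ)) * ρ)).trace = 0 :=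
      Complex.ext ((prob_eq_re_trace_trA A ρ).symm.trans h)
        (Complex.le_def.1 hpos.trace_nonneg).2.symm
    rw [h, hpos.trace_eq_zero_iff.1 htrace, Complex.ofReal_zero, zero_smul]
  · rw [condB, smul_smul, ← Complex.ofReal_mul, mul_inv_cancel₀ h, Complex.ofReal_one, one_smul]

lemma sum_prob_smul_condB {k : ℕ} {P : Fin k → Matrix a a ℂ} (hP : IsPOVM P)
    (hρ : ρ.PosSemidef) : ∑ j, (prob (P j) ρ : ℂ) • condB (P j) ρ = trA ρ := by
  have hkron : ∑ j, P j ⊗ₖ (1 : Matrix b b ℂ) = 1 := by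
    rw [← one_kronecker_one, ← hP.2]
    ext
    simp [Matrix.sum_apply, Finset.sum_mul]
  simp only [fun j => prob_smul_condB (hP.1 j) hρ]
  rw [← trA_sum, ← Finset.sum_mul, hkron, Matrix.one_mul]

end Measurement

theorem vN_holevo_monotone_discard_general {a b c : Type} [Fintype a] [DecidableEq a]
    [Fintype b] [DecidableEq b] [Fintype c] [DecidableEq c] {k : ℕ}
    {ρ : Matrix (a × (b × c)) (a × (b × c)) ℂ} (hρ : ρ.PosSemidef)
    {P : Fin k → Matrix a a ℂ} (hP : IsPOVM P) :
    vN (trB (trA ρ)) -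
        ∑ j ∈ univ.filter (fun j => prob (P j) ρ ≠ 0),
          prob (P j) ρ * vN (trB (condB (P j) ρ)) ≤
      vN (trA ρ) -
        ∑ j ∈ univ.filter (fun j => prob (P j) ρ ≠ 0),
          prob (P j) ρ * vN (condB (P j) ρ) := by
  have hmono := ensembleHolevo_trB_le (fun j => prob_nonneg (hP.1 j) hρ)
    fun j => posSemidef_condB (hP.1 j) hρ
  rw [ensembleHolevo, ensembleHolevo, ← trB_sum_smul, sum_prob_smul_condB hP hρ] at hmono
  rwa [Finset.sum_filter_of_ne fun _ _ => left_ne_zero_of_mul,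
    Finset.sum_filter_of_ne fun _ _ => left_ne_zero_of_mul]

/-- for the von Neumann entropy, `χ(P, b) ≤ χ(P, bc)` for any
tripartite state and any POVM. -/
theorem vN_holevo_monotone_discard
    (m n p k : ℕ)
    (ρ : Matrix (Fin m × (Fin n × Fin p)) (Fin m × (Fin n × Fin p)) ℂ)
    (hρ : IsDensity ρ) (P : Fin k → Matrix (Fin m) (Fin m) ℂ) (hP : IsPOVM P) :
    vN (trB (trA ρ)) -
        ∑ j ∈ univ.filter (fun j => prob (P j) ρ ≠ 0),
          prob (P j) ρ * vN (trB (condB (P j) ρ)) ≤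
      vN (trA ρ) -
        ∑ j ∈ univ.filter (fun j => prob (P j) ρ ≠ 0),
          prob (P j) ρ * vN (condB (P j) ρ) :=
  vN_holevo_monotone_discard_general hρ.1 hP
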